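/- (Uniform from L¹-convergence.) Let f : ℝ^d → ℝ be a convex function of at most polynomial growth, let x ∈ ℝ^d, p ∈ ℝ^d, and let Q be a d × d real matrix, and suppose lim_{t → 0⁺} (1/t) ∫_{ℝ^d} |f(x + y) − f(x) − ⟨p, y⟩ − (1/2)⟨Q y, y⟩| · φ_t(y) dy = 0, where φ_t(y) = (2πt)^{−d/2} exp(−‖y‖²/(2t)). Then f is second differentiable at x with derivatives (p, Q); that is, lim_{h → 0} |f(x + h) − f(x) − ⟨p, h⟩ − (1/2)⟨Q h, h⟩| / ‖h‖² = 0. -/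

import Mathlib

open MeasureTheory Filter Metric
open scoped Topology ENNReal NNReal RealInnerProductSpace

/-- The `d`-dimensional Gaussian heat kernel `φ_t`. -/
noncomputable def heatKernel (d : ℕ) (t : ℝ) (y : EuclideanSpace ℝ (Fin d)) : ℝ :=
  (2 * Real.pi * t) ^ (-(d : ℝ) / 2) * Real.exp (-‖y‖ ^ 2 / (2 * t))

/-- The quadratic form `⟨M y, y⟩` of a matrix `M`. -/
noncomputable def quadForm (d : ℕ) (M : Matrix (Fin d) (Fin d) ℝ)
    (y : EuclideanSpace ℝ (Fin d)) : ℝ :=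
  ∑ i, ∑ j, M i j * y i * y j

section aux
variable {d : ℕ}
local notation "E" => EuclideanSpace ℝ (Fin d)

lemma quad_id1 (Q : Matrix (Fin d) (Fin d) ℝ) (h z : E) :
    quadForm d Q (h + z) + quadForm d Q (h - z) = 2 * quadForm d Q h + 2 * quadForm d Q z := by
  simp only [quadForm, Finset.mul_sum, ← Finset.sum_add_distrib]
  refine Finset.sum_congr rfl fun i _ => Finset.sum_congr rfl fun j _ => ?_
  simp only [PiLp.add_apply, PiLp.sub_apply]
  ring

lemma quad_id2 (Q : Matrix (Fin d) (Fin d) ℝ) (h z : E) :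
    quadForm d Q (h + (2 : ℝ) • z) + quadForm d Q h
      = 2 * quadForm d Q (h + z) + 2 * quadForm d Q z := by
  simp only [quadForm, Finset.mul_sum, ← Finset.sum_add_distrib]
  refine Finset.sum_congr rfl fun i _ => Finset.sum_congr rfl fun j _ => ?_
  simp only [PiLp.add_apply, PiLp.smul_apply, smul_eq_mul]
  ring

lemma quad_bound (Q : Matrix (Fin d) (Fin d) ℝ) :
    ∃ M : ℝ, 0 ≤ M ∧ ∀ y : E, |quadForm d Q y| ≤ M * ‖y‖ ^ 2 := by
  refine ⟨∑ i, ∑ j, |Q i j|, by positivity, fun y => ?_⟩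
  have hy : ∀ i, |y i| ≤ ‖y‖ := fun i => by
    simpa using PiLp.norm_apply_le y i
  rw [Finset.sum_mul]
  refine (Finset.abs_sum_le_sum_abs _ _).trans (Finset.sum_le_sum fun i _ => ?_)
  rw [Finset.sum_mul]
  refine (Finset.abs_sum_le_sum_abs _ _).trans (Finset.sum_le_sum fun j _ => ?_)
  rw [abs_mul, abs_mul, mul_assoc, sq]
  have := hy i
  have := hy j
  gcongr

lemma quad_cont (Q : Matrix (Fin d) (Fin d) ℝ) : Continuous (fun y : E => quadForm d Q y) := by
  unfold quadForm
  fun_prop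

lemma gauss_int (b : ℝ) (hb : 0 < b) :
    Integrable (fun y : E => Real.exp (-b * ‖y‖ ^ 2)) := by
  have := GaussianFourier.integrable_cexp_neg_mul_sq_norm_add (V := E) (b := (b : ℂ))
    (by simpa using hb) 0 0
  have h2 := this.norm
  refine h2.congr (Eventually.of_forall fun y => ?_)
  simp only [Complex.norm_exp]
  congr 1
  simp [← Complex.ofReal_pow]

lemma main_int (g : E → ℝ) (hg : Continuous g) (A : ℝ) (hA : ∀ y, |g y| ≤ A * Real.exp ‖y‖)
    (t : ℝ) (ht : 0 < t) : Integrable (fun y : E => |g y| * heatKernel d t y) := by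
  have hA0 : 0 ≤ A := by
    have := (abs_nonneg _).trans (hA 0)
    simpa using this
  have hi := (gauss_int (d := d) (1 / (4 * t)) (by positivity)).const_mul
    (A * (2 * Real.pi * t) ^ (-(d : ℝ) / 2) * Real.exp t)
  refine hi.mono' ?_ (Eventually.of_forall fun y => ?_)
  · apply Continuous.aestronglyMeasurable
    unfold heatKernel
    fun_prop
  · have h0 : 0 ≤ (2 * Real.pi * t) ^ (-(d : ℝ) / 2) := by positivity
    have h1 : 0 ≤ heatKernel d t y := mul_nonneg h0 (Real.exp_pos _).le
    rw [Real.norm_eq_abs, abs_mul, abs_abs, abs_of_nonneg h1]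
    have key : Real.exp ‖y‖ * Real.exp (-‖y‖ ^ 2 / (2 * t))
        ≤ Real.exp t * Real.exp (-(1 / (4 * t)) * ‖y‖ ^ 2) := by
      rw [← Real.exp_add, ← Real.exp_add]
      apply Real.exp_le_exp.2
      have : 0 ≤ (‖y‖ - 2 * t) ^ 2 / (4 * t) := by positivity
      have e : (‖y‖ - 2 * t) ^ 2 / (4 * t) = (t + -(1 / (4 * t)) * ‖y‖ ^ 2)
        - (‖y‖ + -‖y‖ ^ 2 / (2 * t)) := by
        field_simp
        ring
      linarith
    calc |g y| * heatKernel d t y ≤ (A * Real.exp ‖y‖) * heatKernel d t y := by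
          gcongr; exact hA y
      _ = A * (2 * Real.pi * t) ^ (-(d : ℝ) / 2)
            * (Real.exp ‖y‖ * Real.exp (-‖y‖ ^ 2 / (2 * t))) := by
          unfold heatKernel; ring
      _ ≤ A * (2 * Real.pi * t) ^ (-(d : ℝ) / 2)
            * (Real.exp t * Real.exp (-(1 / (4 * t)) * ‖y‖ ^ 2)) := by gcongr
      _ = _ := by ring

lemma kernel_lower (r : ℝ) (hr : 0 < r) (y : E) (hy : ‖y‖ < 2 * r) :
    1 ≤ (Real.sqrt (2 * Real.pi) ^ d * Real.exp 2 * r ^ d) * heatKernel d (r ^ 2) y := by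
  have e1 : (2 * Real.pi * r ^ 2) ^ (-(d : ℝ) / 2) = ((Real.sqrt (2 * Real.pi) * r) ^ d)⁻¹ := by
    have : 2 * Real.pi * r ^ 2 = (Real.sqrt (2 * Real.pi) * r) ^ (2 : ℝ) := by
      rw [Real.rpow_two, mul_pow, Real.sq_sqrt (by positivity)]
    rw [this, ← Real.rpow_mul (by positivity), ← Real.rpow_natCast, ← Real.rpow_neg (by positivity)]
    congr 1; ring
  have hs : 0 < Real.sqrt (2 * Real.pi) := by positivity
  have e2 : (Real.sqrt (2 * Real.pi) ^ d * Real.exp 2 * r ^ d) * heatKernel d (r ^ 2) y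
      = Real.exp (2 + -‖y‖ ^ 2 / (2 * r ^ 2)) := by
    unfold heatKernel
    rw [e1, mul_pow, Real.exp_add]
    field_simp
  rw [e2]
  apply Real.one_le_exp
  have : ‖y‖ ^ 2 / (2 * r ^ 2) ≤ 2 := by
    rw [div_le_iff₀ (by positivity)]
    nlinarith [norm_nonneg y]
  rw [neg_div]; linarith

lemma avg_bound (G W : E → ℝ) (hW : Integrable W) (hW0 : ∀ y, 0 ≤ W y) (r δ : ℝ) (hr : 0 < r)
    (hδ : 0 < δ) (hδ2 : δ < 1 / 2) (h : E) (hh : ‖h‖ = r) (M : ℝ)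
    (hM : 0 ≤ M) (hGW : ∀ y, ‖y‖ < 2 * r → |G y| ≤ W y)
    (hG : ∀ z, |G h| ≤ 3 * |G (h + z)| + |G (h - z)| + |G (h + (2 : ℝ) • z)| + M * ‖z‖ ^ 2) :
    (δ * r) ^ d * volume.real (ball (0 : E) 1) * |G h| ≤ 5 * (∫ y, W y)
      + (δ * r) ^ d * volume.real (ball (0 : E) 1) * (M * (δ * r) ^ 2) := by
  have hδr : 0 < δ * r := by positivity
  have hδr2 : δ * r < r / 2 := by nlinarith
  have hv : volume.real (ball (0 : E) (δ * r)) = (δ * r) ^ d * volume.real (ball (0 : E) 1) := by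
    rw [Measure.real, Measure.addHaar_ball_of_pos _ _ hδr, ENNReal.toReal_mul,
      ENNReal.toReal_ofReal (by positivity), finrank_euclideanSpace_fin, Measure.real]
  have i1 : Integrable (fun z => W (h + z)) := hW.comp_add_left h
  have i2 : Integrable (fun z => W (h - z)) := hW.comp_sub_left h
  have i3 : Integrable (fun z => W (h + (2 : ℝ) • z)) := i1.comp_smul (by norm_num)
  have e1 : ∫ z, W (h + z) = ∫ z, W z := integral_add_left_eq_self W h
  have e2 : ∫ z, W (h - z) = ∫ z, W z := integral_sub_left_eq_self W volume h
  have hI0 : 0 ≤ ∫ z, W z := integral_nonneg hW0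
  have e3 : ∫ z, W (h + (2 : ℝ) • z) ≤ ∫ z, W z := by
    rw [Measure.integral_comp_smul volume (fun z => W (h + z)) 2, e1, smul_eq_mul]
    apply mul_le_of_le_one_left hI0
    rw [abs_of_nonneg (by positivity)]
    exact inv_le_one_of_one_le₀ (one_le_pow₀ (by norm_num))
  rw [← hv]
  have i12 : Integrable (fun z => 3 * W (h + z) + W (h - z)) := (i1.const_mul 3).add i2
  have isum : Integrable (fun z => 3 * W (h + z) + W (h - z) + W (h + (2 : ℝ) • z)) :=
    ((i1.const_mul 3).add i2).add i3
  have hfin : volume (ball (0 : E) (δ * r)) ≠ ⊤ := measure_ball_lt_top.ne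
  have step : ∫ z in ball (0 : E) (δ * r), |G h| ≤
      ∫ z in ball (0 : E) (δ * r),
        ((3 * W (h + z) + W (h - z) + W (h + (2 : ℝ) • z)) + M * (δ * r) ^ 2) := by
    apply setIntegral_mono_on (integrableOn_const hfin)
      (isum.integrableOn.add (integrableOn_const hfin)) measurableSet_ball
    intro z hz
    have hz' : ‖z‖ < δ * r := by simpa using hz
    have a1 := hGW (h + z) (by have := norm_add_le h z; linarith)
    have a2 := hGW (h - z) (by have := norm_sub_le h z; linarith)
    have a3 := hGW (h + (2 : ℝ) • z) (by
      have := norm_add_le h ((2 : ℝ) • z)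
      rw [norm_smul, Real.norm_eq_abs, abs_of_pos (by norm_num : (0 : ℝ) < 2)] at this
      linarith)
    have a4 : M * ‖z‖ ^ 2 ≤ M * (δ * r) ^ 2 := by gcongr
    have := hG z
    simp only [Pi.add_apply]
    linarith
  rw [integral_add isum.integrableOn (integrableOn_const hfin), setIntegral_const,
    setIntegral_const, smul_eq_mul, smul_eq_mul] at step
  have s2 : ∫ z in ball (0 : E) (δ * r), (3 * W (h + z) + W (h - z) + W (h + (2 : ℝ) • z))
      ≤ ∫ z, (3 * W (h + z) + W (h - z) + W (h + (2 : ℝ) • z)) := by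
    apply setIntegral_le_integral isum (Eventually.of_forall fun z => ?_)
    have := hW0 (h + z)
    have := hW0 (h - z)
    have := hW0 (h + (2 : ℝ) • z)
    simp only [Pi.zero_apply]
    positivity
  have s3 : ∫ z, (3 * W (h + z) + W (h - z) + W (h + (2 : ℝ) • z))
      = 3 * (∫ z, W (h + z)) + (∫ z, W (h - z)) + ∫ z, W (h + (2 : ℝ) • z) := by
    rw [integral_add i12 i3, integral_add (i1.const_mul 3) i2,
      integral_const_mul]
  rw [e1, e2] at s3
  linarith

end aux

/-- Uniform (pointwise second-order) differentiability from `L¹`-convergence of Gaussian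
averages, for a convex function of at most polynomial growth. -/
theorem second_differentiability_from_L1 (d : ℕ)
    (f : EuclideanSpace ℝ (Fin d) → ℝ) (hf : ConvexOn ℝ Set.univ f)
    (C : ℝ) (hC : 0 < C) (k : ℕ) (hgrowth : ∀ y, |f y| ≤ C * (1 + ‖y‖) ^ k)
    (x p : EuclideanSpace ℝ (Fin d)) (Q : Matrix (Fin d) (Fin d) ℝ)
    (hlim : Filter.Tendsto
      (fun t : ℝ => (1 / t) *
        ∫ y, |f (x + y) - f x - ⟪p, y⟫ - (1 / 2) * quadForm d Q y| * heatKernel d t y)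
      (nhdsWithin 0 (Set.Ioi 0)) (nhds 0)) :
    Filter.Tendsto
      (fun h : EuclideanSpace ℝ (Fin d) =>
        |f (x + h) - f x - ⟪p, h⟫ - (1 / 2) * quadForm d Q h| / ‖h‖ ^ 2)
      (nhdsWithin 0 {(0 : EuclideanSpace ℝ (Fin d))}ᶜ) (nhds 0) := by
  obtain ⟨M, hM0, hM⟩ := quad_bound Q
  have hfc : Continuous f := hf.locallyLipschitz.continuous
  have hmid : ∀ u v w : EuclideanSpace ℝ (Fin d), w = (1 / 2 : ℝ) • u + (1 / 2 : ℝ) • v →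
      f w ≤ (1 / 2) * f u + (1 / 2) * f v := by
    rintro u v w rfl
    simpa using hf.2 (Set.mem_univ u) (Set.mem_univ v) (by norm_num : (0 : ℝ) ≤ 1 / 2)
      (by norm_num : (0 : ℝ) ≤ 1 / 2) (by norm_num)
  set g : EuclideanSpace ℝ (Fin d) → ℝ :=
    fun y => f (x + y) - f x - ⟪p, y⟫ - (1 / 2) * quadForm d Q y with hgdef
  have hgc : Continuous g := by
    have := quad_cont Q
    fun_prop
  have hgA : ∃ A, ∀ y, |g y| ≤ A * Real.exp ‖y‖ := by
    refine ⟨C * (k.factorial * Real.exp (1 + ‖x‖)) + |f x| + ‖p‖ + M, fun y => ?_⟩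
    have b1 : |f (x + y)| ≤ C * (k.factorial * Real.exp (1 + ‖x‖)) * Real.exp ‖y‖ := by
      refine (hgrowth _).trans ?_
      rw [mul_assoc C, mul_assoc, ← Real.exp_add]
      gcongr
      have h1 := Real.pow_div_factorial_le_exp (x := 1 + ‖x + y‖) (by positivity) k
      rw [div_le_iff₀ (by positivity)] at h1
      refine h1.trans ?_
      rw [mul_comm]
      refine mul_le_mul_of_nonneg_left (Real.exp_le_exp.2 ?_) (by positivity)
      have := norm_add_le x y
      linarith
    have hn := norm_nonneg y
    have b2 : |f x| ≤ |f x| * Real.exp ‖y‖ :=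
      le_mul_of_one_le_right (abs_nonneg _) (Real.one_le_exp hn)
    have b3 : |⟪p, y⟫| ≤ ‖p‖ * Real.exp ‖y‖ := by
      refine (abs_real_inner_le_norm p y).trans ?_
      gcongr
      have := Real.add_one_le_exp ‖y‖
      linarith
    have b4 : |(1 / 2) * quadForm d Q y| ≤ M * Real.exp ‖y‖ := by
      rw [abs_mul, abs_of_pos (by norm_num : (0 : ℝ) < 1 / 2)]
      have h1 := Real.pow_div_factorial_le_exp (x := ‖y‖) hn 2
      have h2 := hM y
      have h3 : M * (‖y‖ ^ 2 / 2) ≤ M * Real.exp ‖y‖ := by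
        gcongr
        simpa using h1
      linarith
    have t1 := abs_sub (f (x + y) - f x - ⟪p, y⟫) ((1 / 2) * quadForm d Q y)
    have t2 := abs_sub (f (x + y) - f x) ⟪p, y⟫
    have t3 := abs_sub (f (x + y)) (f x)
    simp only [hgdef]
    linarith
  obtain ⟨A, hA⟩ := hgA
  have hG : ∀ h z, |g h| ≤ 3 * |g (h + z)| + |g (h - z)| + |g (h + (2 : ℝ) • z)|
      + M * ‖z‖ ^ 2 := by
    intro h z
    have q1 := quad_id1 Q h z
    have q2 := quad_id2 Q h z
    have m1 := hmid (x + (h + z)) (x + (h - z)) (x + h) (by module)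
    have m2 := hmid (x + h) (x + (h + (2 : ℝ) • z)) (x + (h + z)) (by module)
    have hz := abs_le.1 (hM z)
    have n1 := abs_le.1 (le_refl |g (h + z)|)
    have n2 := abs_le.1 (le_refl |g (h - z)|)
    have n3 := abs_le.1 (le_refl |g (h + (2 : ℝ) • z)|)
    have p1 := abs_nonneg (g (h + z))
    have p2 := abs_nonneg (g (h - z))
    have p3 := abs_nonneg (g (h + (2 : ℝ) • z))
    have u1 : g h ≤ (1 / 2) * g (h + z) + (1 / 2) * g (h - z) + (1 / 2) * quadForm d Q z := by
      simp only [hgdef, inner_add_right, inner_sub_right]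
      linarith
    have u2 : 2 * g (h + z) - g (h + (2 : ℝ) • z) - quadForm d Q z ≤ g h := by
      simp only [hgdef, inner_add_right, inner_smul_right]
      linarith
    have : 0 ≤ M * ‖z‖ ^ 2 := by positivity
    rw [abs_le]
    constructor <;> linarith
  have hω : 0 < volume.real (ball (0 : EuclideanSpace ℝ (Fin d)) 1) :=
    ENNReal.toReal_pos (measure_ball_pos _ _ one_pos).ne' measure_ball_lt_top.ne
  set ω := volume.real (ball (0 : EuclideanSpace ℝ (Fin d)) 1) with hωdef
  set K := Real.sqrt (2 * Real.pi) ^ d * Real.exp 2 with hK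
  have hKpos : 0 < K := by positivity
  have main : ∀ δ : ℝ, 0 < δ → δ < 1 / 2 → ∀ h : EuclideanSpace ℝ (Fin d), h ≠ 0 →
      |g h| / ‖h‖ ^ 2 ≤ (5 * K / (δ ^ d * ω)) *
        ((1 / ‖h‖ ^ 2) * ∫ y, |g y| * heatKernel d (‖h‖ ^ 2) y) + M * δ ^ 2 := by
    intro δ hδ hδ2 h hne
    have hr : 0 < ‖h‖ := norm_pos_iff.2 hne
    generalize hrr : ‖h‖ = r at hr
    have hint := (main_int g hgc A hA (r ^ 2) (by positivity))
    have hk0 : ∀ y, 0 ≤ heatKernel d (r ^ 2) y := fun y => by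
      unfold heatKernel; positivity
    have key := avg_bound g (fun y => (K * r ^ d) * (|g y| * heatKernel d (r ^ 2) y))
      (hint.const_mul _) (fun y => by have := hk0 y; positivity) r δ hr hδ hδ2 h hrr M hM0
      (fun y hy => by
        have := kernel_lower r hr y hy
        have := mul_le_mul_of_nonneg_left this (abs_nonneg (g y))
        simp only [hK]
        linarith) (hG h)
    rw [integral_const_mul, ← hωdef] at key
    set I := ∫ y, |g y| * heatKernel d (r ^ 2) y
    have hpos : 0 < (δ * r) ^ d * ω := by positivity
    rw [div_le_iff₀ (by positivity)]
    refine le_of_mul_le_mul_left (key.trans (le_of_eq ?_)) hpos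
    rw [mul_pow]
    field_simp
  have hlim2 : Tendsto (fun h : EuclideanSpace ℝ (Fin d) =>
      (1 / ‖h‖ ^ 2) * ∫ y, |g y| * heatKernel d (‖h‖ ^ 2) y)
      (nhdsWithin 0 {(0 : EuclideanSpace ℝ (Fin d))}ᶜ) (nhds 0) := by
    refine hlim.comp (g := fun t : ℝ => (1 / t) * ∫ y, |g y| * heatKernel d t y)
      (f := fun h : EuclideanSpace ℝ (Fin d) => ‖h‖ ^ 2) ?_
    rw [tendsto_nhdsWithin_iff]
    constructor
    · have : Continuous (fun h : EuclideanSpace ℝ (Fin d) => ‖h‖ ^ 2) := by fun_prop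
      have := this.tendsto 0
      simp only [norm_zero, ne_eq, OfNat.ofNat_ne_zero, not_false_eq_true, zero_pow] at this
      exact this.mono_left nhdsWithin_le_nhds
    · filter_upwards [self_mem_nhdsWithin] with h hh
      have : 0 < ‖h‖ := norm_pos_iff.2 hh
      exact Set.mem_Ioi.2 (by positivity)
  rw [Metric.tendsto_nhds]
  intro ε hε
  obtain ⟨δ, hδ, hδ2, hδM⟩ : ∃ δ : ℝ, 0 < δ ∧ δ < 1 / 2 ∧ M * δ ^ 2 < ε / 2 := by
    refine ⟨min (1 / 4) (ε / (4 * (M + 1))), by positivity,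
      (min_le_left _ _).trans_lt (by norm_num), ?_⟩
    set δ := min (1 / 4) (ε / (4 * (M + 1)))
    have h0 : 0 < δ := by positivity
    have h1 : δ ≤ 1 / 4 := min_le_left _ _
    have h2 : δ ≤ ε / (4 * (M + 1)) := min_le_right _ _
    rw [le_div_iff₀ (by positivity)] at h2
    have h3 : δ ^ 2 ≤ δ := by nlinarith
    nlinarith [mul_le_mul_of_nonneg_left h3 hM0]
  have hl3 := hlim2.const_mul (5 * K / (δ ^ d * ω))
  rw [mul_zero] at hl3
  filter_upwards [hl3.eventually_lt_const (half_pos hε), self_mem_nhdsWithin] with h h1 h2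
  have := main δ hδ hδ2 h h2
  have h0 : 0 ≤ |g h| / ‖h‖ ^ 2 := by positivity
  rw [Real.dist_eq, sub_zero, abs_of_nonneg h0]
  linarith
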